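/- arXiv:1811.04145 — 2 statements merged into one kernel-verified Lean document; each statement's English description precedes it below -/
import Mathlib

section
/- Let E be a chained entourage in a compact metric space X, and suppose E_ε ⊆ F ⊆ E for some entourage F and some ε > 0. Then every E-chain α has an F-refinement α′ with ν(α′) ≤ 2·ν(α)·C(X,ε/2). -/
open Filter Metric Set
open scoped ENNReal NNReal Topology

variable {X : Type*} [MetricSpace X]

/-- The metric entourage of size `ε`: pairs at distance less than `ε`. -/
def MetricEnt (X : Type*) [MetricSpace X] (ε : ℝ) : Set (X × X) :=
  {p | dist p.1 p.2 < ε}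

/-- An entourage in a metric space: a symmetric subset of `X × X` containing some
metric entourage `E_ε`. -/
def IsEntourage (E : Set (X × X)) : Prop :=
  (∀ p : X × X, p ∈ E → (p.2, p.1) ∈ E) ∧ ∃ ε > 0, MetricEnt X ε ⊆ E

/-- The `E`-ball about `x`: `B(x,E) = {y | (x,y) ∈ E}`. -/
def EBall (E : Set (X × X)) (x : X) : Set X := {y | (x, y) ∈ E}

/-- An `E`-chain: a nonempty finite sequence of points with all consecutive pairs in `E`. -/
def IsEChain (E : Set (X × X)) (l : List X) : Prop :=
  l ≠ [] ∧ l.Chain' (fun a b => (a, b) ∈ E)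

/-- Concatenation of two chains sharing an endpoint (the last point of `α` should be the
first point of `β`). -/
def chainConc (α β : List X) : List X := α ++ β.tail

/-- The length `L(α)` of a chain: the sum of the distances between consecutive points. -/
noncomputable def chainLength : List X → ℝ
  | [] => 0
  | [_] => 0
  | a :: b :: rest => dist a b + chainLength (b :: rest)

/-- A basic move of an `E`-homotopy: inserting a point between two consecutive points
(legal when both new pairs lie in `E`), or removing an interior point (legal when the
resulting consecutive pair lies in `E`).  Endpoints are never changed. -/
inductive EStep (E : Set (X × X)) : List X → List X → Prop
  | insert (pre : List X) (a x b : X) (post : List X)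
      (h1 : (a, x) ∈ E) (h2 : (x, b) ∈ E) :
      EStep E (pre ++ a :: b :: post) (pre ++ a :: x :: b :: post)
  | remove (pre : List X) (a x b : X) (post : List X)
      (h : (a, b) ∈ E) :
      EStep E (pre ++ a :: x :: b :: post) (pre ++ a :: b :: post)

/-- Two chains are `E`-homotopic if one passes from one to the other by finitely many
basic moves. -/
def EHomotopic (E : Set (X × X)) : List X → List X → Prop :=
  Relation.ReflTransGen (EStep E)

/-- Two `E`-loops `l₁`, `l₂` are freely `E`-homotopic if there are `E`-chains `α`, `β`
from a common point to their respective basepoints such that the corresponding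
conjugated loops are `E`-homotopic. -/
def FreelyEHomotopic (E : Set (X × X)) (l₁ l₂ : List X) : Prop :=
  ∃ α β : List X, IsEChain E α ∧ IsEChain E β ∧ α.head? = β.head? ∧
    α.getLast? = l₁.head? ∧ β.getLast? = l₂.head? ∧
    EHomotopic E (chainConc (chainConc α l₁) α.reverse)
      (chainConc (chainConc β l₂) β.reverse)

/-- A subset `A` is chain connected if for every `δ > 0` any two points of `A` are joined
by a `δ`-chain lying in `A`. -/
def ChainConnected (A : Set X) : Prop :=
  ∀ δ > 0, ∀ x ∈ A, ∀ y ∈ A, ∃ l : List X, IsEChain (MetricEnt X δ) l ∧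
    (∀ z ∈ l, z ∈ A) ∧ l.head? = some x ∧ l.getLast? = some y

/-- A chained entourage: an entourage contained in the closure of its interior, this
closure being compact if the space is not, such that any pair `(x,y) ∈ E` may be joined
by arbitrarily fine chains inside `B(x,E) ∩ B(y,E)`. -/
def IsChained (E : Set (X × X)) : Prop :=
  IsEntourage E ∧ E ⊆ closure (interior E) ∧
  (¬ CompactSpace X → IsCompact (closure (interior E))) ∧
  ∀ p ∈ E, ∀ δ > 0, ∃ l : List X, IsEChain (MetricEnt X δ) l ∧
    l.head? = some p.1 ∧ l.getLast? = some p.2 ∧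
    ∀ z ∈ l, z ∈ EBall E p.1 ∩ EBall E p.2

/-- An `F`-refinement of a `D`-chain: between each pair of consecutive points `x`, `y` of
the original chain insert an `F`-chain from `x` to `y` lying in `B(x,D) ∩ B(y,D)`. -/
inductive IsRefinement (D F : Set (X × X)) : List X → List X → Prop
  | single (x : X) : IsRefinement D F [x] [x]
  | cons (x y : X) (seg rest refRest : List X)
      (hseg : IsEChain F (x :: (seg ++ [y])))
      (hin : ∀ z ∈ x :: (seg ++ [y]), z ∈ EBall D x ∩ EBall D y)
      (hrest : IsRefinement D F (y :: rest) refRest) :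
      IsRefinement D F (x :: y :: rest) (x :: (seg ++ refRest))

/-- An `E`-subdivision of a curve `c` (regarded on `[0,1]`): an `E`-chain
`{c(t₀),…,c(tₙ)}` with `0 = t₀ ≤ ⋯ ≤ tₙ = 1` such that the restriction of `c` to each
`[tᵢ,tᵢ₊₁]` lies in `B(c(tᵢ),E) ∩ B(c(tᵢ₊₁),E)`. -/
def IsSubdivision (E : Set (X × X)) (c : ℝ → X) (l : List X) : Prop :=
  ∃ ts : List ℝ, ts.head? = some 0 ∧ ts.getLast? = some 1 ∧
    l = ts.map c ∧ IsEChain E l ∧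
    ts.Chain' (fun a b => a ≤ b ∧ ∀ s, a ≤ s → s ≤ b →
      c s ∈ EBall E (c a) ∩ EBall E (c b))

/-- `c` is a stringing of the chain `l` iff `c` is a curve on `[0,1]` of which `l` is an
`E`-subdivision. -/
def IsStringing (E : Set (X × X)) (l : List X) (c : ℝ → X) : Prop :=
  ContinuousOn c (Set.Icc 0 1) ∧ IsSubdivision E c l

/-- Two curves with the same endpoints are `E`-homotopic if they admit `E`-homotopic
`E`-subdivisions. -/
def CurveEHomotopic (E : Set (X × X)) (c₁ c₂ : ℝ → X) : Prop :=
  ∃ l₁ l₂ : List X, IsSubdivision E c₁ l₁ ∧ IsSubdivision E c₂ l₂ ∧ EHomotopic E l₁ l₂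

/-- Two closed curves are freely `E`-homotopic if they admit freely `E`-homotopic
`E`-subdivisions. -/
def CurveFreelyEHomotopic (E : Set (X × X)) (c₁ c₂ : ℝ → X) : Prop :=
  ∃ l₁ l₂ : List X, IsSubdivision E c₁ l₁ ∧ IsSubdivision E c₂ l₂ ∧ FreelyEHomotopic E l₁ l₂

/-- A `D`-small loop: a `D`-loop of the form `γ * τ * γ̄` where `τ` is a `D`-loop with
exactly three edges. -/
def IsSmallLoop (D : Set (X × X)) (l : List X) : Prop :=
  ∃ (γ : List X) (a b c : X), IsEChain D γ ∧ γ.getLast? = some a ∧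
    (a, b) ∈ D ∧ (b, c) ∈ D ∧ (c, a) ∈ D ∧
    l = chainConc (chainConc γ [a, b, c, a]) γ.reverse

/-- `C(X,ε)`: the minimal number of open `ε`-balls needed to cover `X`. -/
noncomputable def coveringNumber (X : Type*) [MetricSpace X] (ε : ℝ) : ℕ :=
  sInf {n : ℕ | ∃ s : Finset X, s.card = n ∧ (⋃ x ∈ s, Metric.ball x ε) = Set.univ}

/-- A geodesic space: any two points are joined by a curve whose length (total
variation) equals the distance between them. -/
def IsGeodesicSpace (X : Type*) [MetricSpace X] : Prop :=
  ∀ x y : X, ∃ f : ℝ → X, ContinuousOn f (Set.Icc 0 1) ∧ f 0 = x ∧ f 1 = y ∧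
    eVariationOn f (Set.Icc 0 1) = ENNReal.ofReal (dist x y)

/-- Fixed-endpoint path homotopy of two curves on `[0,1]`. -/
def PathHomotopicOn (f g : ℝ → X) : Prop :=
  ∃ H : ℝ × ℝ → X, ContinuousOn H (Set.Icc 0 1 ×ˢ Set.Icc 0 1) ∧
    (∀ t ∈ Set.Icc (0:ℝ) 1, H (0, t) = f t ∧ H (1, t) = g t) ∧
    (∀ s ∈ Set.Icc (0:ℝ) 1, H (s, 0) = f 0 ∧ H (s, 1) = f 1)

/-- Concatenation of a list of chains (each sharing its endpoint with the next). -/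
def concList : List (List X) → List X
  | [] => []
  | [l] => l
  | l :: l' :: ls => chainConc l (concList (l' :: ls))

/-- Concatenation of two curves on `[0,1]`. -/
noncomputable def concat2 (f g : ℝ → X) : ℝ → X :=
  fun t => if t ≤ 1 / 2 then f (2 * t) else g (2 * t - 1)

/-- Concatenation of a finite list of loops based at `p`. -/
noncomputable def concatLoops (p : X) : List (ℝ → X) → ℝ → X
  | [] => fun _ => p
  | [f] => f
  | f :: g :: fs => concat2 f (concatLoops p (g :: fs))

/-- A curve on `[0,1]` is parameterized proportional to arclength. -/
def PropToArclength (c : ℝ → X) : Prop :=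
  ∀ t ∈ Set.Icc (0:ℝ) 1, eVariationOn c (Set.Icc 0 t) =
    ENNReal.ofReal t * eVariationOn c (Set.Icc 0 1)

/-- A closed curve (parameterized on `[0,1]` proportional to arclength) is a closed
`κ`-geodesic if every subarc of its periodic extension of length at most `κ` has length
equal to the distance between its endpoints. -/
def IsClosedKGeodesic (c : ℝ → X) (κ : ℝ) : Prop :=
  c 0 = c 1 ∧
  ∀ s t : ℝ, s ≤ t →
    eVariationOn (fun u => c (Int.fract u)) (Set.Icc s t) ≤ ENNReal.ofReal κ →
    eVariationOn (fun u => c (Int.fract u)) (Set.Icc s t) =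
      ENNReal.ofReal (dist (c (Int.fract s)) (c (Int.fract t)))

/-!
Two points of the same `ε/2`-ball are less than `ε` apart, so an `ε`-chain can be shortened by
jumping from the first point it has in a ball of a cover directly to the last one. The rest of the
chain never returns to that ball, so at most two points per ball survive. Applied to the `ε`-chains
that a chained entourage supplies between consecutive points of `α`, inside the prescribed balls,
this bounds the number of edges inserted for each edge of `α`.
-/

theorem exists_eq_append_cons_and_forall_not {β : Type*} (p : β → Prop) {l : List β}
    (h : ∃ a ∈ l, p a) : ∃ l₁ a l₂, l = l₁ ++ a :: l₂ ∧ p a ∧ ∀ b ∈ l₂, ¬p b := by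
  induction l with
  | nil => simp at h
  | cons c t ih =>
    by_cases ht : ∃ a ∈ t, p a
    · obtain ⟨l₁, a, l₂, rfl, ha, hl₂⟩ := ih ht
      exact ⟨c :: l₁, a, l₂, rfl, ha, hl₂⟩
    · have hc : p c := by simpa [ht] using h
      exact ⟨[], c, t, rfl, hc, by simpa using ht⟩

theorem exists_isChain_subset_length_le_two_mul_card {β ι : Type*} {r : β → β → Prop}
    {s : Finset ι} {U : ι → Set β} (hU : ∀ i ∈ s, ∀ a ∈ U i, ∀ b ∈ U i, r a b)
    {l : List β} (hl : l.IsChain r) (hcover : ∀ z ∈ l, ∃ i ∈ s, z ∈ U i)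
    {x y : β} (hx : l.head? = some x) (hy : l.getLast? = some y) :
    ∃ m, (x :: (m ++ [y])).IsChain r ∧ x :: (m ++ [y]) ⊆ l ∧ m.length + 2 ≤ 2 * s.card := by
  classical
  induction s using Finset.strongInduction generalizing l x with
  | H s ih =>
    have hxl : x ∈ l := List.mem_of_mem_head? hx
    obtain ⟨i, hi, hxi⟩ := hcover x hxl
    have hcard : (s.erase i).card + 1 = s.card := Finset.card_erase_add_one hi
    obtain ⟨before, z, after, rfl, hzi, hafter⟩ :=
      exists_eq_append_cons_and_forall_not (· ∈ U i) ⟨x, hxl, hxi⟩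
    have hxz : r x z := hU i hi x hxi z hzi
    rcases after with _ | ⟨w, t⟩
    · obtain rfl : z = y := by simpa using hy
      exact ⟨[], by simpa using hxz, by simpa using hxl, by simp only [List.length_nil]; omega⟩
    · obtain ⟨hzw, hwt⟩ := List.isChain_cons_cons.1 hl.right_of_append
      have hcover' : ∀ u ∈ w :: t, ∃ j ∈ s.erase i, u ∈ U j := by
        intro u hu
        obtain ⟨j, hj, huj⟩ := hcover u (List.mem_append_right _ (List.mem_cons_of_mem _ hu))
        have hji : j ≠ i := by
          rintro rfl
          exact hafter u hu huj
        exact ⟨j, Finset.mem_erase.2 ⟨hji, hj⟩, huj⟩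
      obtain ⟨m, hm, hsub, hlen⟩ := ih (s.erase i) (Finset.erase_ssubset hi)
        (fun j hj ↦ hU j (Finset.mem_of_mem_erase hj)) hwt hcover' rfl (by simpa using hy)
      refine ⟨z :: w :: m, ?_, ?_, ?_⟩
      · exact .cons_cons hxz (.cons_cons hzw hm)
      · have hsuffix : w :: t ⊆ before ++ z :: w :: t := by simp
        exact List.cons_subset.2 ⟨hxl, List.cons_subset.2 ⟨by simp, fun _ hu ↦ hsuffix (hsub hu)⟩⟩
      · simp only [List.length_cons]
        omega

theorem exists_finset_card_eq_coveringNumber (hX : TotallyBounded (univ : Set X)) {ε : ℝ}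
    (hε : 0 < ε) : ∃ s : Finset X, s.card = coveringNumber X ε ∧ ⋃ x ∈ s, ball x ε = univ := by
  obtain ⟨t, ht, hcover⟩ := totallyBounded_iff.1 hX ε hε
  refine Nat.sInf_mem (s := {n | ∃ s : Finset X, s.card = n ∧ ⋃ x ∈ s, ball x ε = univ}) ?_
  exact ⟨_, ht.toFinset, rfl, univ_subset_iff.1 (by simpa using hcover)⟩

theorem IsEChain.exists_subset_length_le_two_mul_coveringNumber
    (hX : TotallyBounded (univ : Set X)) {ε : ℝ} (hε : 0 < ε) {l : List X}
    (hl : IsEChain (MetricEnt X ε) l) {x y : X} (hx : l.head? = some x)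
    (hy : l.getLast? = some y) :
    ∃ m, IsEChain (MetricEnt X ε) (x :: (m ++ [y])) ∧ x :: (m ++ [y]) ⊆ l ∧
      m.length + 2 ≤ 2 * coveringNumber X (ε / 2) := by
  obtain ⟨s, hs, hcover⟩ := exists_finset_card_eq_coveringNumber hX (half_pos hε)
  have hball : ∀ c ∈ s, ∀ a ∈ ball c (ε / 2), ∀ b ∈ ball c (ε / 2), (a, b) ∈ MetricEnt X ε := by
    intro c _ a ha b hb
    calc dist a b ≤ dist a c + dist b c := dist_triangle_right a b c
      _ < ε / 2 + ε / 2 := add_lt_add ha hb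
      _ = ε := add_halves ε
  have hmem : ∀ z ∈ l, ∃ c ∈ s, z ∈ ball c (ε / 2) := fun z _ ↦ by
    simpa using hcover.ge (mem_univ z)
  obtain ⟨m, hm, hsub, hlen⟩ :=
    exists_isChain_subset_length_le_two_mul_card hball hl.2 hmem hx hy
  exact ⟨m, ⟨List.cons_ne_nil _ _, hm⟩, hsub, hs ▸ hlen⟩

theorem IsEChain.exists_isRefinement_length_le {Y : Type*} {D F : Set (Y × Y)} {N : ℕ}
    (hseg : ∀ x y, (x, y) ∈ D → ∃ seg, IsEChain F (x :: (seg ++ [y])) ∧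
      (∀ z ∈ x :: (seg ++ [y]), z ∈ EBall D x ∩ EBall D y) ∧ seg.length + 1 ≤ N)
    {α : List Y} (hα : IsEChain D α) :
    ∃ α', IsRefinement D F α α' ∧ α'.length - 1 ≤ (α.length - 1) * N := by
  obtain ⟨hne, hchain⟩ := hα
  induction α with
  | nil => contradiction
  | cons x t ih =>
    rcases t with _ | ⟨y, t⟩
    · exact ⟨[x], .single x, by simp⟩
    · obtain ⟨hxy, hyt⟩ := List.isChain_cons_cons.1 hchain
      obtain ⟨seg, hF, hD, hN⟩ := hseg x y hxy
      obtain ⟨β, hβ, hlen⟩ := ih (List.cons_ne_nil _ _) hyt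
      refine ⟨x :: (seg ++ β), .cons x y seg t β hF hD hβ, ?_⟩
      simp only [List.length_cons, List.length_append, Nat.add_sub_cancel, Nat.add_mul,
        Nat.one_mul] at hlen ⊢
      omega

theorem refinement_size_bound_general (hX : TotallyBounded (univ : Set X)) {E F : Set (X × X)}
    {ε : ℝ} (hε : 0 < ε)
    (hE : ∀ p ∈ E, ∃ l, IsEChain (MetricEnt X ε) l ∧ l.head? = some p.1 ∧
      l.getLast? = some p.2 ∧ ∀ z ∈ l, z ∈ EBall E p.1 ∩ EBall E p.2)
    (hF : MetricEnt X ε ⊆ F) {α : List X} (hα : IsEChain E α) :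
    ∃ α', IsRefinement E F α α' ∧
      α'.length - 1 ≤ (α.length - 1) * (2 * coveringNumber X (ε / 2) - 1) := by
  refine hα.exists_isRefinement_length_le fun x y hxy ↦ ?_
  obtain ⟨l, hl, hx, hy, hlE⟩ := hE (x, y) hxy
  obtain ⟨seg, hseg, hsub, hlen⟩ :=
    hl.exists_subset_length_le_two_mul_coveringNumber hX hε hx hy
  have hsegF : IsEChain F (x :: (seg ++ [y])) := ⟨hseg.1, hseg.2.imp fun _ _ h ↦ hF h⟩
  exact ⟨seg, hsegF, fun z hz ↦ hlE z (hsub hz), by omega⟩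

/-- if `E` is a chained entourage in a compact metric space and
`E_ε ⊆ F ⊆ E`, then every `E`-chain `α` has an `F`-refinement `α'` with
`ν(α') ≤ 2·ν(α)·C(X,ε/2)`. -/
theorem refinement_size_bound [CompactSpace X] (E F : Set (X × X))
    (hE : IsChained E) (hF : IsEntourage F) (ε : ℝ) (hε : 0 < ε)
    (h1 : MetricEnt X ε ⊆ F) (h2 : F ⊆ E) (α : List X) (hα : IsEChain E α) :
    ∃ α' : List X, IsRefinement E F α α' ∧
      α'.length - 1 ≤ 2 * (α.length - 1) * coveringNumber X (ε / 2) := by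
  obtain ⟨α', hα', hlen⟩ := refinement_size_bound_general isCompact_univ.totallyBounded hε
    (fun p hp ↦ hE.2.2.2 p hp ε hε) h1 hα
  exact ⟨α', hα', hlen.trans ((Nat.mul_le_mul_left _ (Nat.sub_le _ 1)).trans_eq (by ring))⟩
end

section
/- Let E be an entourage in a metric space X and let α, β be E-chains with the same endpoints. If there exist a stringing α̂ of α and a stringing β̂ of β that are path homotopic with fixed endpoints, then α and β are E-homotopic. -/
open Filter Metric Set
open scoped ENNReal NNReal Topology

variable {X : Type*} [MetricSpace X]

/-!
Pull `E` back along the homotopy `H` to the unit square, where by compactness it contains all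
pairs of `δ`-close points. The chains underlying the two stringings refine, up to `E`-homotopy, to
the images of fine chains on the left and right sides of the square. As `H` is constant along the
top and the bottom, the first of these may be continued along the top and the second preceded by
the bottom, which gives two fine chains from `(0, 0)` to `(1, 1)` in a bounded convex set. Any such
chain can be coned off towards its last point: replacing each of its points by the straight chain
from there to the end, one thin triangle after another, turns it into the uniform subdivision of the
segment between its endpoints. Hence the two chains are homotopic, and so are their images.
-/

open scoped Uniformity

theorem exists_eq_cons_append_singleton {Y : Type*} {l : List Y} {a b : Y} (hab : a ≠ b)
    (ha : l.head? = some a) (hb : l.getLast? = some b) : ∃ m, l = a :: (m ++ [b]) := by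
  obtain ⟨l, rfl⟩ := List.head?_eq_some_iff.1 ha
  obtain ⟨m, hm⟩ := List.getLast?_eq_some_iff.1 hb
  cases m with
  | nil => simp_all
  | cons c m => exact ⟨m, by simp_all⟩

theorem forall_mem_Icc_of_isChain_le {Y : Type*} [Preorder Y] {l : List Y} {a b : Y}
    (hl : (a :: (l ++ [b])).IsChain (· ≤ ·)) : ∀ z ∈ a :: (l ++ [b]), z ∈ Icc a b := by
  have hpair := List.isChain_iff_pairwise.1 hl
  have hlower := List.pairwise_cons.1 hpair
  have hupper := List.pairwise_append.1 hpair.tail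
  have hab : a ≤ b := hlower.1 b (by simp)
  simp only [List.mem_cons, List.mem_append, List.not_mem_nil, or_false]
  rintro z (rfl | hz | rfl)
  · exact left_mem_Icc.2 hab
  · exact ⟨hlower.1 z (by simp [hz]), hupper.2.2 z hz b (by simp)⟩
  · exact right_mem_Icc.2 hab

section Chains

variable {Y Z : Type*} {E F : Set (Y × Y)} {a b : Y} {l l' pre post : List Y}

theorem isEChain_iff : IsEChain E l ↔ l ≠ [] ∧ l.IsChain fun a b ↦ (a, b) ∈ E :=
  Iff.rfl

theorem isEChain_cons_cons : IsEChain E (a :: b :: l) ↔ (a, b) ∈ E ∧ IsEChain E (b :: l) := by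
  simp [isEChain_iff]

theorem isEChain_append_cons :
    IsEChain E (pre ++ a :: post) ↔ IsEChain E (pre ++ [a]) ∧ IsEChain E (a :: post) := by
  simp [isEChain_iff, List.isChain_split (l₁ := pre) (l₂ := post)]

theorem IsEChain.left_of_append (hl : IsEChain E (a :: (l ++ l'))) : IsEChain E (a :: l) :=
  ⟨List.cons_ne_nil _ _, (List.cons_append ▸ hl.2).left_of_append⟩

theorem IsEChain.change_head (h : ∀ y, (a, y) ∈ E → (b, y) ∈ E) (hl : IsEChain E (a :: l)) :
    IsEChain E (b :: l) := by
  cases l with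
  | nil => simp [isEChain_iff]
  | cons y l =>
    rw [isEChain_cons_cons] at hl ⊢
    exact ⟨h y hl.1, hl.2⟩

theorem IsEChain.mono (hEF : E ⊆ F) (hl : IsEChain E l) : IsEChain F l :=
  ⟨hl.1, hl.2.imp fun _ _ h ↦ hEF h⟩

theorem isEChain_map {E : Set (Z × Z)} (K : Y → Z) :
    IsEChain E (l.map K) ↔ IsEChain (Prod.map K K ⁻¹' E) l := by
  simp [isEChain_iff, List.isChain_map]

theorem EStep.cons (a : Y) (h : EStep E l l') : EStep E (a :: l) (a :: l') := by
  cases h with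
  | insert pre x y z post hxy hyz => exact .insert (a :: pre) x y z post hxy hyz
  | remove pre x y z post hxz => exact .remove (a :: pre) x y z post hxz

theorem EStep.map {E : Set (Z × Z)} (K : Y → Z) (h : EStep (Prod.map K K ⁻¹' E) l l') :
    EStep E (l.map K) (l'.map K) := by
  cases h with
  | insert pre x y z post hxy hyz =>
    simpa only [List.map_append, List.map_cons] using
      EStep.insert (E := E) (pre.map K) (K x) (K y) (K z) (post.map K) hxy hyz
  | remove pre x y z post hxz =>
    simpa only [List.map_append, List.map_cons] using
      EStep.remove (E := E) (pre.map K) (K x) (K y) (K z) (post.map K) hxz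

theorem EStep.isEChain (h : EStep E l l') (hl : IsEChain E l) : IsEChain E l' := by
  cases h with
  | insert pre x y z post hxy hyz =>
    rw [isEChain_append_cons, isEChain_cons_cons] at hl ⊢
    exact ⟨hl.1, hxy, isEChain_cons_cons.2 ⟨hyz, hl.2.2⟩⟩
  | remove pre x y z post hxz =>
    rw [isEChain_append_cons, isEChain_cons_cons, isEChain_cons_cons] at hl
    exact isEChain_append_cons.2 ⟨hl.1, isEChain_cons_cons.2 ⟨hxz, hl.2.2.2⟩⟩

theorem EStep.symm (h : EStep E l l') (hl : IsEChain E l) : EStep E l' l := by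
  cases h with
  | insert pre x y z post hxy hyz =>
    rw [isEChain_append_cons, isEChain_cons_cons] at hl
    exact .remove pre x y z post hl.2.1
  | remove pre x y z post hxz =>
    rw [isEChain_append_cons, isEChain_cons_cons, isEChain_cons_cons] at hl
    exact .insert pre x y z post hl.2.1 hl.2.2.1

theorem EHomotopic.of_eStep (h : EStep E l l') : EHomotopic E l l' :=
  .single h

theorem EHomotopic.cons (a : Y) (h : EHomotopic E l l') : EHomotopic E (a :: l) (a :: l') :=
  Relation.ReflTransGen.lift (List.cons a) (fun _ _ ↦ EStep.cons a) _ _ h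

theorem EHomotopic.map {E : Set (Z × Z)} (K : Y → Z) (h : EHomotopic (Prod.map K K ⁻¹' E) l l') :
    EHomotopic E (l.map K) (l'.map K) :=
  Relation.ReflTransGen.lift (List.map K) (fun _ _ ↦ EStep.map K) _ _ h

theorem EHomotopic.isEChain (h : EHomotopic E l l') (hl : IsEChain E l) : IsEChain E l' := by
  induction h with
  | refl => exact hl
  | tail _ hstep ih => exact hstep.isEChain ih

theorem EHomotopic.symm (h : EHomotopic E l l') (hl : IsEChain E l) : EHomotopic E l' l := by
  induction h with
  | refl => exact .refl
  | tail hinit hstep ih => exact .head (hstep.symm (EHomotopic.isEChain hinit hl)) ih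

theorem eHomotopic_insert_list {mid : List Y} (hc : IsEChain E (a :: mid))
    (hb : ∀ z ∈ mid, (z, b) ∈ E) :
    EHomotopic E (a :: b :: post) (a :: (mid ++ b :: post)) := by
  induction mid generalizing a with
  | nil => exact .refl
  | cons m mid ih =>
    rw [isEChain_cons_cons] at hc
    rw [List.forall_mem_cons] at hb
    exact .head (.insert [] a m b post hc.1 hb.1) ((ih hc.2 hb.2).cons a)

theorem eHomotopic_append_insert_list {mid : List Y} (hc : IsEChain E (a :: (pre ++ mid)))
    (hb : ∀ z ∈ mid, (z, b) ∈ E) :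
    EHomotopic E (a :: (pre ++ b :: post)) (a :: (pre ++ (mid ++ b :: post))) := by
  induction pre generalizing a with
  | nil => exact eHomotopic_insert_list hc hb
  | cons m pre ih =>
    rw [List.cons_append, isEChain_cons_cons] at hc
    exact (ih hc.2).cons a

/-- The ladder between the rails `x` and `y` is cut by the diagonals into the triangles
`x i, y i, y (i + 1)` and `x i, x (i + 1), y (i + 1)`; the homotopy sweeps them one at a time,
starting from the common last point. -/
theorem eHomotopic_cons_of_ladder (x y : ℕ → Y) (n : ℕ) (hlast : x (n + 1) = y (n + 1))
    (hxy : ∀ i ≤ n, (x i, y i) ∈ E) (hyy : ∀ i ≤ n, (y i, y (i + 1)) ∈ E)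
    (hdiag : ∀ i ≤ n, (x i, y (i + 1)) ∈ E) :
    EHomotopic E ((List.range (n + 2)).map x) (x 0 :: (List.range (n + 2)).map y) := by
  induction n generalizing x y with
  | zero =>
    have hmove := EStep.insert [] (x 0) (y 0) (y 1) [] (hxy 0 le_rfl) (hyy 0 le_rfl)
    simpa [List.range_succ, hlast] using EHomotopic.of_eStep hmove
  | succ n ih =>
    have hrest := ih (fun i ↦ x (i + 1)) (fun i ↦ y (i + 1)) hlast
      (fun i hi ↦ hxy (i + 1) (by lia)) (fun i hi ↦ hyy (i + 1) (by lia))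
      (fun i hi ↦ hdiag (i + 1) (by lia))
    have hrange (w : ℕ → Y) : (List.range (n + 1 + 2)).map w =
        w 0 :: w 1 :: (List.range (n + 1)).map fun i ↦ w (i + 2) := by
      simp [List.range_succ_eq_map, Function.comp_def]
    have hrange' (w : ℕ → Y) : (List.range (n + 2)).map w =
        w 0 :: (List.range (n + 1)).map fun i ↦ w (i + 1) := by
      simp [List.range_succ_eq_map, Function.comp_def]
    rw [hrange', hrange'] at hrest
    rw [hrange, hrange]
    refine (hrest.cons (x 0)).trans ?_
    exact .head (.remove [] _ _ _ _ (hdiag 0 (by lia)))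
      (.single (.insert [] _ _ _ _ (hxy 0 (by lia)) (hyy 0 (by lia))))

end Chains

/-- The trace on `D` of the metric entourage of size `δ`; its chains with at least two points are
the `δ`-chains lying in `D`. -/
def MetricEntOn {W : Type*} [MetricSpace W] (D : Set W) (δ : ℝ) : Set (W × W) :=
  MetricEnt W δ ∩ D ×ˢ D

section MetricEntOn

variable {W W' : Type*} [MetricSpace W] [MetricSpace W'] {D : Set W} {δ : ℝ} {x y p q : W}
  {l : List W}

theorem mem_metricEntOn : (x, y) ∈ MetricEntOn D δ ↔ dist x y < δ ∧ x ∈ D ∧ y ∈ D :=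
  Iff.rfl

theorem metricEntOn_mono {δ' : ℝ} (h : δ ≤ δ') : MetricEntOn D δ ⊆ MetricEntOn D δ' :=
  fun _ he ↦ ⟨he.1.trans_le h, he.2⟩

theorem forall_mem_of_isEChain_metricEntOn
    (hl : IsEChain (MetricEntOn D δ) (p :: (l ++ [q]))) : ∀ z ∈ p :: (l ++ [q]), z ∈ D := by
  induction l generalizing p with
  | nil => simpa using (mem_metricEntOn.1 (isEChain_cons_cons.1 hl).1).2
  | cons y l ih =>
    obtain ⟨hpy, hl⟩ := isEChain_cons_cons.1 hl
    exact List.forall_mem_cons.2 ⟨(mem_metricEntOn.1 hpy).2.1, ih hl⟩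

theorem IsEChain.map_prodMk {S : Set W'} {s : W'} (hs : s ∈ S)
    (hl : IsEChain (MetricEntOn D δ) l) :
    IsEChain (MetricEntOn (S ×ˢ D) δ) (l.map (Prod.mk s)) := by
  refine (isEChain_map _).2 (hl.mono ?_)
  rintro ⟨a, b⟩ ⟨hab, ha, hb⟩
  exact ⟨dist_prod_same_left.trans_lt hab, ⟨hs, ha⟩, hs, hb⟩

theorem exists_metricEntOn_subset_preimage {Y : Type*} [UniformSpace Y] {E : Set (Y × Y)}
    {K : W → Y} (hD : IsCompact D) (hK : ContinuousOn K D) (hE : E ∈ 𝓤 Y) :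
    ∃ δ > 0, MetricEntOn D δ ⊆ Prod.map K K ⁻¹' E :=
  (Metric.uniformity_basis_dist.inf_principal _).mem_iff.1
    (hD.uniformContinuousOn_of_continuous hK hE)

end MetricEntOn

section Segments

variable {V : Type*} [NormedAddCommGroup V] [NormedSpace ℝ V]

/-- The `i`-th of the points cutting the segment `[x, y]` into `n + 1` equal parts; it lies on the
segment for `i ≤ n + 1`. -/
noncomputable def segmentPoint (n : ℕ) (x y : V) (i : ℕ) : V :=
  AffineMap.lineMap x y ((i : ℝ) / (n + 1))

/-- The chain subdividing the segment `[x, y]` into `n + 1` equal parts, endpoints included. -/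
noncomputable def segmentChain (n : ℕ) (x y : V) : List V :=
  (List.range (n + 2)).map (segmentPoint n x y)

variable {D : Set V} {F : Set (V × V)} {δ : ℝ} {n i : ℕ} {x y p q r : V} {l l' : List V}

theorem segmentPoint_zero (n : ℕ) (x y : V) : segmentPoint n x y 0 = x := by
  simp [segmentPoint]

theorem segmentPoint_last (n : ℕ) (x y : V) : segmentPoint n x y (n + 1) = y := by
  simp [segmentPoint, (by positivity : (n + 1 : ℝ) ≠ 0)]

theorem segmentPoint_mem_segment (hi : i ≤ n + 1) (x y : V) :
    segmentPoint n x y i ∈ segment ℝ x y :=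
  lineMap_mem_segment ℝ x y
    ⟨by positivity, div_le_one_of_le₀ (mod_cast hi) (by positivity)⟩

theorem dist_segmentPoint_succ (n i : ℕ) (x y : V) :
    dist (segmentPoint n x y i) (segmentPoint n x y (i + 1)) = dist x y / (n + 1) := by
  rw [segmentPoint, segmentPoint, dist_lineMap_lineMap, Real.dist_eq, ← sub_div, Nat.cast_succ,
    sub_add_cancel_left, abs_div, abs_neg, abs_one, abs_of_pos (by positivity),
    one_div_mul_eq_div]

theorem dist_segmentPoint_le (hi : i ≤ n + 1) (x y q : V) :
    dist (segmentPoint n x q i) (segmentPoint n y q i) ≤ dist x y := by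
  have hnonneg : (0 : ℝ) ≤ i / (n + 1) := by positivity
  have hle : (i : ℝ) / (n + 1) ≤ 1 := div_le_one_of_le₀ (mod_cast hi) (by positivity)
  have hsub : segmentPoint n x q i - segmentPoint n y q i = (1 - (i : ℝ) / (n + 1)) • (x - y) := by
    simp only [segmentPoint, AffineMap.lineMap_apply_module]
    module
  rw [dist_eq_norm, dist_eq_norm, hsub, norm_smul, Real.norm_of_nonneg (by linarith)]
  exact mul_le_of_le_one_left (norm_nonneg _) (by linarith)

theorem exists_segmentChain_eq (n : ℕ) (x y : V) :
    ∃ m, segmentChain n x y = x :: (m ++ [y]) ∧ ∀ z ∈ m, z ∈ segment ℝ x y := by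
  refine ⟨(List.range n).map fun i ↦ segmentPoint n x y (i + 1), ?_, ?_⟩
  · rw [segmentChain, List.range_succ_eq_map, List.range_succ]
    simp [segmentPoint_zero, segmentPoint_last]
  · simp only [List.forall_mem_map, List.mem_range]
    exact fun i hi ↦ segmentPoint_mem_segment (by lia) x y

theorem isEChain_segmentChain (hD : Convex ℝ D) (hx : x ∈ D) (hy : y ∈ D)
    (hn : dist x y < (n + 1) * δ) : IsEChain (MetricEntOn D δ) (segmentChain n x y) := by
  refine isEChain_iff.2 ⟨by simp [segmentChain], ?_⟩
  rw [segmentChain, List.isChain_map, List.isChain_range]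
  have hmem {i : ℕ} (hi : i ≤ n + 1) : segmentPoint n x y i ∈ D :=
    hD.segment_subset hx hy (segmentPoint_mem_segment hi x y)
  refine fun i hi ↦ mem_metricEntOn.2 ⟨?_, hmem (by lia), hmem (by lia)⟩
  rwa [dist_segmentPoint_succ, div_lt_iff₀' (by positivity)]

theorem exists_isEChain_segment (hD : Convex ℝ D) (hδ : 0 < δ) (hx : x ∈ D) (hy : y ∈ D) :
    ∃ m, IsEChain (MetricEntOn D δ) (x :: (m ++ [y])) ∧ ∀ z ∈ m, z ∈ segment ℝ x y := by
  obtain ⟨n, hn⟩ := exists_nat_gt (dist x y / δ)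
  rw [div_lt_iff₀ hδ] at hn
  obtain ⟨m, hm, hmseg⟩ := exists_segmentChain_eq n x y
  exact ⟨m, hm ▸ isEChain_segmentChain hD hx hy (by linarith), hmseg⟩

theorem exists_metricEntOn_refinement (hD : Convex ℝ D) (hδ : 0 < δ) (hF : MetricEntOn D δ ⊆ F)
    (hl : IsEChain {e : V × V | e ∈ D ×ˢ D ∧ ∀ z ∈ segment ℝ e.1 e.2, (z, e.2) ∈ F}
      (p :: (l ++ [q]))) :
    ∃ m, IsEChain (MetricEntOn D δ) (p :: (m ++ [q])) ∧
      EHomotopic F (p :: (l ++ [q])) (p :: (m ++ [q])) := by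
  induction l generalizing p with
  | nil =>
    obtain ⟨⟨⟨hp, hq⟩, hseg⟩, -⟩ := isEChain_cons_cons.1 hl
    obtain ⟨m, hm, hmseg⟩ := exists_isEChain_segment hD hδ hp hq
    exact ⟨m, hm, eHomotopic_insert_list (hm.left_of_append.mono hF)
      fun z hz ↦ hseg z (hmseg z hz)⟩
  | cons y l ih =>
    obtain ⟨⟨⟨hp, hy⟩, hseg⟩, hl⟩ := isEChain_cons_cons.1 hl
    obtain ⟨m', hm', hhom⟩ := ih hl
    obtain ⟨m, hm, hmseg⟩ := exists_isEChain_segment hD hδ hp hy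
    refine ⟨m ++ y :: m', ?_, (hhom.cons p).trans ?_⟩ <;> rw [List.append_assoc]
    · exact (isEChain_append_cons (pre := p :: m)).2 ⟨hm, hm'⟩
    · exact eHomotopic_insert_list (hm.left_of_append.mono hF) fun z hz ↦ hseg z (hmseg z hz)

theorem eHomotopic_segmentChain_cons (hD : Convex ℝ D) (hF : MetricEntOn D δ ⊆ F)
    (hx : x ∈ D) (hy : y ∈ D) (hq : q ∈ D) (hxy : dist x y < δ / 2)
    (hn : dist y q < (n + 1) * (δ / 2)) :
    EHomotopic F (segmentChain n x q) (x :: segmentChain n y q) := by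
  have hmem {v : V} (hv : v ∈ D) {i : ℕ} (hi : i ≤ n + 1) : segmentPoint n v q i ∈ D :=
    hD.segment_subset hv hq (segmentPoint_mem_segment hi v q)
  have hrung (i : ℕ) (hi : i ≤ n) :
      dist (segmentPoint n x q i) (segmentPoint n y q i) < δ / 2 :=
    (dist_segmentPoint_le (by lia) x y q).trans_lt hxy
  have hstep (i : ℕ) : dist (segmentPoint n y q i) (segmentPoint n y q (i + 1)) < δ / 2 := by
    rwa [dist_segmentPoint_succ, div_lt_iff₀' (by positivity)]
  have hδ : 0 < δ / 2 := dist_nonneg.trans_lt hxy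
  nth_rw 2 [← segmentPoint_zero n x q]
  refine eHomotopic_cons_of_ladder _ _ n (by simp only [segmentPoint_last])
    (fun i hi ↦ hF (mem_metricEntOn.2 ⟨?_, hmem hx (by lia), hmem hy (by lia)⟩))
    (fun i hi ↦ hF (mem_metricEntOn.2 ⟨?_, hmem hy (by lia), hmem hy (by lia)⟩))
    (fun i hi ↦ hF (mem_metricEntOn.2 ⟨?_, hmem hx (by lia), hmem hy (by lia)⟩))
  · exact (hrung i hi).trans (half_lt_self (by linarith))
  · exact (hstep i).trans (half_lt_self (by linarith))
  · exact (dist_triangle _ (segmentPoint n y q i) _).trans_lt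
      ((add_lt_add (hrung i hi) (hstep i)).trans_eq (add_halves δ))

theorem eHomotopic_segmentChain (hD : Convex ℝ D) (hF : MetricEntOn D δ ⊆ F)
    (hn : ∀ y ∈ D, dist y q < (n + 1) * (δ / 2))
    (hl : IsEChain (MetricEntOn D (δ / 2)) (p :: (l ++ [q]))) :
    EHomotopic F (p :: (l ++ [q])) (segmentChain n p q) := by
  induction l generalizing p with
  | nil =>
    obtain ⟨hpq, hp, hq⟩ := mem_metricEntOn.1 (isEChain_cons_cons.1 hl).1
    have hδ : 0 < δ / 2 := dist_nonneg.trans_lt hpq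
    obtain ⟨m, hm, hmseg⟩ := exists_segmentChain_eq n p q
    have hchain := isEChain_segmentChain (δ := δ) (n := n) hD hp hq (by nlinarith [hn p hp])
    rw [hm] at hchain ⊢
    refine eHomotopic_insert_list (hchain.left_of_append.mono hF) fun z hz ↦
      hF (mem_metricEntOn.2 ⟨?_, hD.segment_subset hp hq (hmseg z hz), hq⟩)
    linarith [dist_add_dist_of_mem_segment (hmseg z hz), dist_nonneg (x := p) (y := z)]
  | cons y l ih =>
    obtain ⟨hpy, hl⟩ := isEChain_cons_cons.1 hl
    obtain ⟨hpy, hp, hy⟩ := mem_metricEntOn.1 hpy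
    have hδ : 0 < δ / 2 := dist_nonneg.trans_lt hpy
    have hq : q ∈ D := forall_mem_of_isEChain_metricEntOn hl q (by simp)
    have hchain := isEChain_segmentChain (δ := δ) (n := n) hD hp hq (by nlinarith [hn p hp])
    exact ((ih hl).cons p).trans
      ((eHomotopic_segmentChain_cons hD hF hp hy hq hpy (hn y hy)).symm (hchain.mono hF))

theorem eHomotopic_of_convex (hD : Convex ℝ D) (hDb : Bornology.IsBounded D) (hδ : 0 < δ)
    (hF : MetricEntOn D δ ⊆ F) (hl : IsEChain (MetricEntOn D (δ / 2)) (p :: (l ++ [q])))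
    (hl' : IsEChain (MetricEntOn D (δ / 2)) (p :: (l' ++ [q]))) :
    EHomotopic F (p :: (l ++ [q])) (p :: (l' ++ [q])) := by
  have hq : q ∈ D := forall_mem_of_isEChain_metricEntOn hl q (by simp)
  have hsub : MetricEntOn D (δ / 2) ⊆ F := (metricEntOn_mono (half_le_self hδ.le)).trans hF
  obtain ⟨n, hn⟩ := exists_nat_gt (Metric.diam D / (δ / 2))
  rw [div_lt_iff₀ (by linarith)] at hn
  have hn' (y) (hy : y ∈ D) : dist y q < (n + 1) * (δ / 2) := by
    linarith [Metric.dist_le_diam_of_mem hDb hy hq]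
  exact (eHomotopic_segmentChain hD hF hn' hl).trans
    ((eHomotopic_segmentChain hD hF hn' hl').symm (hl'.mono hsub))

theorem exists_isEChain_change_last (hD : Convex ℝ D) (hδ : 0 < δ) (hF : MetricEntOn D δ ⊆ F)
    (hl : IsEChain (MetricEntOn D δ) (p :: (l ++ [q]))) (hr : r ∈ D)
    (hseg : ∀ z ∈ segment ℝ q r, (z, r) ∈ F) :
    ∃ m, IsEChain (MetricEntOn D δ) (p :: (m ++ [r])) ∧
      EHomotopic F (p :: (l ++ [r])) (p :: (m ++ [r])) := by
  have hq : q ∈ D := forall_mem_of_isEChain_metricEntOn hl q (by simp)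
  obtain ⟨m, hm, hmseg⟩ := exists_isEChain_segment hD hδ hq hr
  have hchain : IsEChain (MetricEntOn D δ) (p :: (l ++ (q :: m) ++ [r])) := by
    rw [List.append_assoc]
    exact (isEChain_append_cons (pre := p :: l)).2 ⟨hl, hm⟩
  refine ⟨l ++ q :: m, hchain, ?_⟩
  rw [List.append_assoc]
  exact eHomotopic_append_insert_list (hchain.left_of_append.mono hF) <|
    List.forall_mem_cons.2 ⟨hseg q (left_mem_segment ℝ q r), fun z hz ↦ hseg z (hmseg z hz)⟩

theorem exists_isEChain_change_head (hD : Convex ℝ D) (hδ : 0 < δ) (hF : MetricEntOn D δ ⊆ F)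
    (hl : IsEChain (MetricEntOn D δ) (q :: (l ++ [r]))) (hp : p ∈ D)
    (hseg : ∀ z ∈ segment ℝ p q, ∀ b, (q, b) ∈ F → (z, b) ∈ F) :
    ∃ m, IsEChain (MetricEntOn D δ) (p :: (m ++ [r])) ∧
      EHomotopic F (p :: (l ++ [r])) (p :: (m ++ [r])) := by
  have hq : q ∈ D := forall_mem_of_isEChain_metricEntOn hl q (by simp)
  obtain ⟨m, hm, hmseg⟩ := exists_isEChain_segment hD hδ hp hq
  obtain ⟨b, post, hb⟩ : ∃ b post, l ++ [r] = b :: post :=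
    List.exists_cons_of_ne_nil (List.concat_ne_nil r l)
  have hqb : (q, b) ∈ F := hF (isEChain_cons_cons.1 (hb ▸ hl)).1
  refine ⟨m ++ q :: l, ?_, ?_⟩ <;> rw [List.append_assoc]
  · exact (isEChain_append_cons (pre := p :: m)).2 ⟨hm, hl⟩
  · rw [List.cons_append, hb, List.append_cons]
    refine eHomotopic_insert_list (hm.mono hF) fun z hz ↦ hseg z ?_ b hqb
    rcases List.mem_append.1 hz with hz | hz
    · exact hmseg z hz
    · exact List.mem_singleton.1 hz ▸ right_mem_segment ℝ p q

end Segments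

section Square

variable {δ : ℝ} {us vs : List ℝ}

theorem eHomotopic_of_square {F : Set ((ℝ × ℝ) × ℝ × ℝ)} (hδ : 0 < δ)
    (hF : MetricEntOn (Icc 0 1 ×ˢ Icc 0 1) δ ⊆ F)
    (htop : ∀ s ∈ Icc (0 : ℝ) 1, ((s, 1), (1, 1)) ∈ F)
    (hbot : ∀ s ∈ Icc (0 : ℝ) 1, ∀ b, ((1, 0), b) ∈ F → ((s, 0), b) ∈ F)
    (hus : IsEChain (MetricEntOn (Icc 0 1) (δ / 2)) (0 :: (us ++ [1])))
    (hvs : IsEChain (MetricEntOn (Icc 0 1) (δ / 2)) (0 :: (vs ++ [1]))) :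
    EHomotopic F ((0, 0) :: (us.map (Prod.mk 0) ++ [(1, 1)]))
      ((0, 0) :: (vs.map (Prod.mk 1) ++ [(1, 1)])) := by
  have hzero : (0 : ℝ) ∈ Icc (0 : ℝ) 1 := left_mem_Icc.2 zero_le_one
  have hone : (1 : ℝ) ∈ Icc (0 : ℝ) 1 := right_mem_Icc.2 zero_le_one
  have hconv : Convex ℝ (Icc (0 : ℝ) 1 ×ˢ Icc (0 : ℝ) 1) := (convex_Icc 0 1).prod (convex_Icc 0 1)
  have hbdd := (isBounded_Icc (0 : ℝ) 1).prod (isBounded_Icc (0 : ℝ) 1)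
  have hF' := (metricEntOn_mono (half_le_self hδ.le)).trans hF
  have hleft := hus.map_prodMk hzero
  have hright := hvs.map_prodMk hone
  simp only [List.map_cons, List.map_append, List.map_nil] at hleft hright
  obtain ⟨m, hm, hum⟩ := exists_isEChain_change_last (r := (1, 1)) hconv (half_pos hδ) hF' hleft
    ⟨hone, hone⟩ fun z hz ↦ by
      rw [← Prod.image_mk_segment_left, segment_eq_Icc zero_le_one] at hz
      obtain ⟨s, hs, rfl⟩ := hz
      exact htop s hs
  obtain ⟨m', hm', hvm⟩ := exists_isEChain_change_head (p := (0, 0)) hconv (half_pos hδ) hF' hright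
    ⟨hzero, hzero⟩ fun z hz ↦ by
      rw [← Prod.image_mk_segment_left, segment_eq_Icc zero_le_one] at hz
      obtain ⟨s, hs, rfl⟩ := hz
      exact hbot s hs
  have hv : IsEChain F ((0, 0) :: (vs.map (Prod.mk 1) ++ [(1, 1)])) :=
    (hright.mono hF').change_head (hbot 0 hzero)
  exact (hum.trans (eHomotopic_of_convex hconv hbdd hδ hF hm hm')).trans (hvm.symm hv)

end Square

theorem PathHomotopicOn.exists_eHomotopic {E : Set (X × X)} (hE : E ∈ 𝓤 X) {f g : ℝ → X}
    (hfg : PathHomotopicOn f g) :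
    ∃ δ > 0, ∀ us vs : List ℝ, IsEChain (MetricEntOn (Icc 0 1) δ) (0 :: (us ++ [1])) →
      IsEChain (MetricEntOn (Icc 0 1) δ) (0 :: (vs ++ [1])) →
      EHomotopic E ((0 :: (us ++ [1])).map f) ((0 :: (vs ++ [1])).map g) := by
  obtain ⟨H, hH, hend, hfix⟩ := hfg
  have hzero : (0 : ℝ) ∈ Icc (0 : ℝ) 1 := left_mem_Icc.2 zero_le_one
  have hone : (1 : ℝ) ∈ Icc (0 : ℝ) 1 := right_mem_Icc.2 zero_le_one
  obtain ⟨δ, hδ, hF⟩ :=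
    exists_metricEntOn_subset_preimage (isCompact_Icc.prod isCompact_Icc) hH hE
  refine ⟨δ / 2, half_pos hδ, fun us vs hus hvs ↦ ?_⟩
  have hmem {l : List ℝ} (hl : IsEChain (MetricEntOn (Icc 0 1) (δ / 2)) (0 :: (l ++ [1])))
      {t : ℝ} (ht : t ∈ l) : t ∈ Icc (0 : ℝ) 1 :=
    forall_mem_of_isEChain_metricEntOn hl t (by simp [ht])
  have hu : (0 :: (us ++ [1])).map f = ((0, 0) :: (us.map (Prod.mk 0) ++ [(1, 1)])).map H := by
    simpa [(hfix 1 hone).1, (hfix 0 hzero).1, (hfix 1 hone).2] using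
      fun t ht ↦ (hend t (hmem hus ht)).1.symm
  have hv : (0 :: (vs ++ [1])).map g = ((0, 0) :: (vs.map (Prod.mk 1) ++ [(1, 1)])).map H := by
    simpa [← (hend 0 hzero).2, ← (hend 1 hone).2, (hfix 0 hzero).1, (hfix 1 hone).1] using
      fun t ht ↦ (hend t (hmem hvs ht)).2.symm
  rw [hu, hv]
  refine (eHomotopic_of_square hδ hF (fun s hs ↦ ?_) (fun s hs b hb ↦ ?_) hus hvs).map H
  · simpa only [mem_preimage, Prod.map_apply, (hfix s hs).2, (hfix 1 hone).2] using
      refl_mem_uniformity hE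
  · simpa only [mem_preimage, Prod.map, (hfix s hs).1, (hfix 1 hone).1] using hb

theorem IsEntourage.mem_uniformity {E : Set (X × X)} (hE : IsEntourage E) : E ∈ 𝓤 X := by
  obtain ⟨-, ε, hε, hsub⟩ := hE
  exact Metric.mem_uniformity_dist.2 ⟨ε, hε, fun _ _ h ↦ hsub h⟩

theorem IsStringing.exists_refinement {E : Set (X × X)} {l : List X} {c : ℝ → X} {δ : ℝ}
    (hE : IsEntourage E) (hl : IsStringing E l c) (hδ : 0 < δ) :
    ∃ us, IsEChain (MetricEntOn (Icc 0 1) δ) (0 :: (us ++ [1])) ∧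
      EHomotopic E l ((0 :: (us ++ [1])).map c) := by
  obtain ⟨hc, ts, hhead, hlast, rfl, -, hts⟩ := hl
  obtain ⟨m, rfl⟩ := exists_eq_cons_append_singleton zero_ne_one hhead hlast
  obtain ⟨η, hη, hF⟩ := exists_metricEntOn_subset_preimage isCompact_Icc hc hE.mem_uniformity
  have hmem := forall_mem_Icc_of_isChain_le (hts.imp fun _ _ h ↦ h.1)
  obtain ⟨us, hus, hhom⟩ := exists_metricEntOn_refinement (convex_Icc (0 : ℝ) 1) (lt_min hδ hη)
    ((metricEntOn_mono (min_le_right δ η)).trans hF)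
    (isEChain_iff.2 ⟨List.cons_ne_nil _ _, hts.imp_of_mem_imp fun a b ha hb hab ↦
      ⟨⟨hmem a ha, hmem b hb⟩, fun z hz ↦ by
        rw [segment_eq_Icc hab.1] at hz
        exact hE.1 _ (hab.2 z hz.1 hz.2).2⟩⟩)
  exact ⟨us, hus.mono (metricEntOn_mono (min_le_left δ η)), hhom.map c⟩

/-- if two `E`-chains with the same endpoints admit stringings that are
path homotopic with fixed endpoints, then the chains are `E`-homotopic. -/
theorem stringings_homotopic_imp_chains_homotopic (E : Set (X × X))
    (hE : IsEntourage E) (α β : List X) (hα : IsEChain E α) (hβ : IsEChain E β)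
    (hhead : α.head? = β.head?) (hlast : α.getLast? = β.getLast?)
    (f g : ℝ → X) (hf : IsStringing E α f) (hg : IsStringing E β g)
    (hfg : PathHomotopicOn f g) :
    EHomotopic E α β := by
  obtain ⟨δ, hδ, hsquare⟩ := hfg.exists_eHomotopic hE.mem_uniformity
  obtain ⟨us, hus, hαf⟩ := hf.exists_refinement hE hδ
  obtain ⟨vs, hvs, hβg⟩ := hg.exists_refinement hE hδ
  exact (hαf.trans (hsquare us vs hus hvs)).trans (hβg.symm hβ)
end
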